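/- arXiv:gr-qc/0508085 — 7 statements merged into one kernel-verified Lean document; each statement's English description precedes it below -/
import Mathlib

section
/- For all natural numbers n and k with k ≤ n, the sum over j from 0 to min(k, n−k) of (C(2k, k+j) − C(2k, k+j+1)) · (C(2n−2k, n−k+j) − C(2n−2k, n−k+j+1)) equals catalan(n) = C(2n,n)/(n+1). -/
/-- The multiplicity d_j^{(2m)} as an integer. -/
def dd (m j : ℕ) : ℤ := (Nat.choose (2 * m) (m + j) : ℤ) - Nat.choose (2 * m) (m + j + 1)

lemma dd_succ_succ (m j : ℕ) : dd (m+1) (j+1) = dd m j + 2 * dd m (j+1) + dd m (j+2) := by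
  unfold dd
  have e : 2 * (m+1) = 2*m+1+1 := by ring
  have e1 : m + 1 + (j+1) = m + j + 1 + 1 := by ring
  rw [e, e1]
  have e2 : m + (j+1) = m + j + 1 := by ring
  have e3 : m + (j+2) = m + j + 1 + 1 := by ring
  rw [e2, e3]
  simp only [Nat.choose_succ_succ']
  push_cast
  ring

lemma dd_succ_zero (m : ℕ) : dd (m+1) 0 = dd m 0 + dd m 1 := by
  unfold dd
  cases m with
  | zero => simp
  | succ m =>
    have hs : Nat.choose (2*(m+1)) m = Nat.choose (2*(m+1)) (m+2) :=
      Nat.choose_symm_of_eq_add (by ring)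
    have e : 2 * (m+1+1) = 2*(m+1)+1+1 := by ring
    rw [e]
    generalize 2*(m+1) = t at *
    simp only [Nat.choose_succ_succ', add_zero]
    push_cast
    rw [hs]
    ring

lemma dd_tele (a b N : ℕ) :
    ∑ j ∈ Finset.range (N+1), (dd (a+1) j * dd b j - dd a j * dd (b+1) j) =
      dd a (N+1) * dd b N - dd a N * dd b (N+1) := by
  induction N with
  | zero => simp [dd_succ_zero]; ring
  | succ N ih => rw [Finset.sum_range_succ, ih, dd_succ_succ, dd_succ_succ]; ring

lemma dd_zero_of_lt (m j : ℕ) (h : m < j) : dd m j = 0 := by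
  unfold dd
  rw [Nat.choose_eq_zero_of_lt (by omega), Nat.choose_eq_zero_of_lt (by omega)]; simp

lemma dd_catalan (n : ℕ) : dd n 0 = catalan n := by
  have h1 := succ_mul_catalan_eq_centralBinom n
  have h2 := Nat.choose_succ_right_eq (2*n) n
  rw [Nat.centralBinom_eq_two_mul_choose] at h1
  have e : 2 * n - n = n := by omega
  rw [e] at h2
  unfold dd
  zify at h1 h2
  have h3 : ((n:ℤ)+1) ≠ 0 := by positivity
  apply mul_left_cancel₀ h3
  rw [h1]
  simp only [add_zero]
  linear_combination -h2

lemma dd_sum (a : ℕ) : ∀ b N : ℕ, a + b ≤ N →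
    ∑ j ∈ Finset.range (N+1), dd a j * dd b j = catalan (a+b) := by
  induction a with
  | zero =>
    intro b N _
    rw [Finset.sum_range_succ', Finset.sum_eq_zero]
    · simp [← dd_catalan, dd]
    · intro j _
      rw [dd_zero_of_lt 0 (j+1) (by omega), zero_mul]
  | succ a ih =>
    intro b N h
    have t := dd_tele a b N
    rw [dd_zero_of_lt a (N+1) (by omega), dd_zero_of_lt a N (by omega),
      Finset.sum_sub_distrib, ih (b+1) N (by omega)] at t
    have e : a + 1 + b = a + (b+1) := by ring
    rw [e]
    linarith

lemma dd_cast (m j : ℕ) :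
    ((Nat.choose (2 * m) (m + j) - Nat.choose (2 * m) (m + j + 1) : ℕ) : ℤ) = dd m j := by
  unfold dd
  apply Nat.cast_sub
  have h := Nat.choose_succ_right_eq (2*m) (m+j)
  have h2 : 2 * m - (m+j) ≤ m + j + 1 := by omega
  have h3 := Nat.mul_le_mul_left (Nat.choose (2*m) (m+j)) h2
  rw [← h] at h3
  exact Nat.le_of_mul_le_mul_right h3 (by omega)

/-- Σ_{j=0}^{min(k, n−k)} d_j^{(2k)} · d_j^{(2n−2k)} = catalan n, where
d_j^{(2m)} = C(2m, m+j) − C(2m, m+j+1). -/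
theorem stmt_7 (n k : ℕ) (h : k ≤ n) :
    ∑ j ∈ Finset.range (min k (n - k) + 1),
        (Nat.choose (2 * k) (k + j) - Nat.choose (2 * k) (k + j + 1)) *
          (Nat.choose (2 * n - 2 * k) (n - k + j) - Nat.choose (2 * n - 2 * k) (n - k + j + 1)) =
      catalan n := by
  obtain ⟨b, rfl⟩ := Nat.exists_eq_add_of_le h
  have e1 : 2 * (k + b) - 2 * k = 2 * b := by omega
  have e2 : k + b - k = b := by omega
  rw [e1, e2]
  apply Nat.cast_injective (R := ℤ)
  rw [← dd_sum k b (k+b) le_rfl, Nat.cast_sum]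
  simp only [Nat.cast_mul, dd_cast]
  apply Finset.sum_subset
  · intro j hj
    simp only [Finset.mem_range] at *
    omega
  · intro j _ hj
    simp only [Finset.mem_range] at hj
    rcases Nat.lt_or_ge k j with h1 | h1
    · rw [dd_zero_of_lt k j h1, zero_mul]
    · rw [dd_zero_of_lt b j (by omega), mul_zero]
end

section
/- For all natural numbers n and j with j + 1 ≤ n, writing d_j := C(2n, n+j) − C(2n, n+j+1), the identity d_{j+1} · (n+j+2) · (2j+1) = d_j · (n−j) · (2j+3) holds; consequently d_{j+1} > d_j if and only if n ≥ 2(j+1)². -/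
theorem aux_step (n i : ℕ) :
    Nat.choose (2 * n) (n + i + 1) * (n + i + 1) = Nat.choose (2 * n) (n + i) * (n - i) := by
  rw [Nat.choose_succ_right_eq]
  congr 1
  omega

theorem aux_d (n i : ℕ) (h : i ≤ n) :
    (Nat.choose (2 * n) (n + i) - Nat.choose (2 * n) (n + i + 1)) * (n + i + 1)
      = Nat.choose (2 * n) (n + i) * (2 * i + 1) := by
  rw [Nat.sub_mul, aux_step, ← Nat.mul_sub]
  congr 1
  omega

/-- With d_j := C(2n, n+j) − C(2n, n+j+1): the ratio identity
d_{j+1}·(n+j+2)·(2j+1) = d_j·(n−j)·(2j+3), and d_{j+1} > d_j ↔ n ≥ 2(j+1)². -/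
theorem stmt_8 (n j : ℕ) (h : j + 1 ≤ n)
    (d : ℕ → ℕ)
    (hd : ∀ i, d i = Nat.choose (2 * n) (n + i) - Nat.choose (2 * n) (n + i + 1)) :
    d (j + 1) * (n + j + 2) * (2 * j + 1) = d j * (n - j) * (2 * j + 3) ∧
      (d (j + 1) > d j ↔ n ≥ 2 * (j + 1) ^ 2) := by
  have h0 := aux_d n j (by omega)
  have h1 := aux_d n (j + 1) h
  rw [← hd] at h0 h1
  have hs := aux_step n j
  have hpos : 0 < Nat.choose (2 * n) (n + j) := Nat.choose_pos (by omega)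
  rw [← add_assoc n j 1] at h1
  generalize Nat.choose (2 * n) (n + j) = A at *
  generalize Nat.choose (2 * n) (n + j + 1) = B at *
  generalize d (j + 1) = y at *
  have hx : 0 < d j := by
    rcases Nat.eq_zero_or_pos (d j) with h | h
    · rw [h, zero_mul] at h0
      have : 0 < A * (2 * j + 1) := by positivity
      omega
    · exact h
  generalize d j = x at *
  clear hd
  obtain ⟨k, rfl⟩ := Nat.exists_eq_add_of_le h
  have e : j + 1 + k - j = k + 1 := by omega
  rw [e] at hs ⊢
  have key : y * (j + 1 + k + j + 2) * (2 * j + 1) = x * (k + 1) * (2 * j + 3) := by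
    apply Nat.eq_of_mul_eq_mul_right (show 0 < j + 1 + k + j + 1 by omega)
    zify at h0 h1 hs ⊢
    linear_combination (2 * j + 1) * (j + 1 + k + j + 1 : ℤ) * h1
      - (k + 1 : ℤ) * (2 * j + 3) * h0 + (2 * j + 1 : ℤ) * (2 * j + 3) * hs
  refine ⟨key, ?_⟩
  constructor
  · intro hyx
    by_contra hc
    have hc' : k + 1 ≤ 2 * j ^ 2 + 3 * j + 1 := by nlinarith
    have hle : (k + 1) * (2 * j + 3) ≤ (j + 1 + k + j + 2) * (2 * j + 1) := by nlinarith
    have a1 := Nat.mul_le_mul_left x hle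
    have a2 : x * ((j + 1 + k + j + 2) * (2 * j + 1)) < y * ((j + 1 + k + j + 2) * (2 * j + 1)) :=
      Nat.mul_lt_mul_of_pos_right hyx (by positivity)
    nlinarith
  · intro hn
    by_contra hc
    have hlt : (j + 1 + k + j + 2) * (2 * j + 1) < (k + 1) * (2 * j + 3) := by nlinarith
    have a1 := Nat.mul_lt_mul_of_pos_left hlt hx
    have a2 : y * ((j + 1 + k + j + 2) * (2 * j + 1)) ≤ x * ((j + 1 + k + j + 2) * (2 * j + 1)) :=
      Nat.mul_le_mul_right _ (by omega)
    nlinarith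
end

section
/- Let T_n denote the number of sequences (a₁, …, a_n) with each a_i ∈ {−1, 0, 1} and a₁ + ⋯ + a_n = 0. Then T_n · √n / 3^n converges to √3/(2√π) as n → ∞. -/
open Filter

lemma aux_exp_int (m : ℤ) :
    ∫ θ in (-Real.pi)..Real.pi, Complex.exp ((m * Complex.I) * (θ : ℂ)) =
      if m = 0 then 2 * (Real.pi : ℂ) else 0 := by
  split_ifs with h
  · subst h
    simp
    ring
  · have hc : (m : ℂ) * Complex.I ≠ 0 := by simp [h]
    rw [integral_exp_mul_complex hc, div_eq_zero_iff]
    left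
    rw [sub_eq_zero, Complex.exp_eq_exp_iff_exists_int]
    refine ⟨m, ?_⟩
    push_cast
    ring

lemma aux_count (n : ℕ) :
    ∫ θ in (-Real.pi)..Real.pi, (1 + 2 * Real.cos θ) ^ n =
      2 * Real.pi * (Set.ncard {a : Fin n → ℤ |
        (∀ i, a i = -1 ∨ a i = 0 ∨ a i = 1) ∧ (∑ i, a i) = 0} : ℝ) := by
  have hset : {a : Fin n → ℤ | (∀ i, a i = -1 ∨ a i = 0 ∨ a i = 1) ∧ (∑ i, a i) = 0} =
      (((Fintype.piFinset (fun _ : Fin n => ({-1, 0, 1} : Finset ℤ))).filter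
        (fun a => ∑ i, a i = 0) : Finset (Fin n → ℤ)) : Set (Fin n → ℤ)) := by
    ext a
    simp [Fintype.mem_piFinset]
  rw [hset, Set.ncard_coe_finset]
  have h1 : ∀ θ : ℝ, (((1 + 2 * Real.cos θ) ^ n : ℝ) : ℂ) =
      ∑ a ∈ Fintype.piFinset (fun _ : Fin n => ({-1, 0, 1} : Finset ℤ)),
        Complex.exp ((((∑ i, a i : ℤ) : ℂ) * Complex.I) * (θ : ℂ)) := by
    intro θ
    have h2 : ((1 + 2 * Real.cos θ : ℝ) : ℂ) =
        ∑ j ∈ ({-1, 0, 1} : Finset ℤ), Complex.exp (((j : ℂ) * Complex.I) * (θ : ℂ)) := by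
      push_cast
      rw [Complex.two_cos]
      rw [Finset.sum_insert (by decide), Finset.sum_insert (by decide), Finset.sum_singleton]
      simp
      rw [mul_comm (θ : ℂ)]
      ring
    rw [Complex.ofReal_pow, h2]
    have h3 := Finset.prod_univ_sum (fun _ : Fin n => ({-1, 0, 1} : Finset ℤ))
      (fun _ j => Complex.exp (((j : ℂ) * Complex.I) * (θ : ℂ)))
    rw [Finset.prod_const, Finset.card_univ, Fintype.card_fin] at h3
    rw [h3]
    refine Finset.sum_congr rfl fun a _ => ?_
    rw [← Complex.exp_sum]
    push_cast
    rw [Finset.sum_mul, Finset.sum_mul]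
  have h4 : ((∫ θ in (-Real.pi)..Real.pi, (1 + 2 * Real.cos θ) ^ n : ℝ) : ℂ) =
      2 * Real.pi * (((Fintype.piFinset (fun _ : Fin n => ({-1, 0, 1} : Finset ℤ))).filter
        (fun a => ∑ i, a i = 0)).card : ℂ) := by
    rw [← intervalIntegral.integral_ofReal]
    simp_rw [h1]
    rw [intervalIntegral.integral_finsetSum]
    · simp_rw [aux_exp_int]
      rw [← Finset.sum_filter, Finset.sum_const, nsmul_eq_mul]
      ring
    · intro a _
      apply Continuous.intervalIntegrable
      fun_prop
  exact_mod_cast h4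

lemma aux_bound (θ : ℝ) (h : |θ| ≤ Real.pi) :
    |(1 + 2 * Real.cos θ) / 3| ≤ Real.exp (-(1 / Real.pi ^ 2) * θ ^ 2) := by
  have hpi := Real.pi_pos
  have hq : θ ^ 2 / Real.pi ^ 2 ≤ 1 := by
    rw [div_le_one (by positivity)]
    exact sq_le_sq' (by linarith [abs_le.mp h]) (abs_le.mp h).2
  have hq0 : 0 ≤ θ ^ 2 / Real.pi ^ 2 := by positivity
  have e : -(1 / Real.pi ^ 2) * θ ^ 2 = - (θ ^ 2 / Real.pi ^ 2) := by ring
  rw [e]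
  have hc := Real.cos_le_one_sub_mul_cos_sq h
  have h1 := Real.add_one_le_exp (- (θ ^ 2 / Real.pi ^ 2))
  have e2 : 2 / Real.pi ^ 2 * θ ^ 2 = 2 * (θ ^ 2 / Real.pi ^ 2) := by ring
  rw [e2] at hc
  rw [abs_le]
  constructor
  · have h2 : Real.exp (-1) ≤ Real.exp (- (θ ^ 2 / Real.pi ^ 2)) :=
      Real.exp_le_exp.mpr (by linarith)
    have h3 : 1 / 3 ≤ Real.exp (-1) := by
      rw [Real.exp_neg, ← one_div]
      exact one_div_le_one_div_of_le (Real.exp_pos _) Real.exp_one_lt_three.le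
    linarith [Real.neg_one_le_cos θ]
  · linarith

lemma aux_ptwise (x : ℝ) :
    Tendsto (fun n : ℕ => ((1 + 2 * Real.cos (x / Real.sqrt n)) / 3) ^ n) atTop
      (nhds (Real.exp (-(1 / 3) * x ^ 2))) := by
  have h0 : Tendsto (fun n : ℕ => x / Real.sqrt n / 2) atTop (nhds 0) := by
    have : Tendsto (fun n : ℕ => Real.sqrt n) atTop atTop :=
      Real.tendsto_sqrt_atTop.comp tendsto_natCast_atTop_atTop
    simpa using (this.const_div_atTop x).div_const 2
  have h1 : Tendsto (fun n : ℕ => Real.sinc (x / Real.sqrt n / 2)) atTop (nhds 1) := by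
    have := (Real.continuous_sinc.tendsto 0).comp h0
    simpa [Function.comp_def] using this
  have h2 : ∀ u : ℝ, Real.sin u = u * Real.sinc u := by
    intro u
    by_cases hu : u = 0
    · simp [hu]
    · rw [Real.sinc_of_ne_zero hu]; field_simp
  have h3 : Tendsto (fun n : ℕ => (n : ℝ) * ((2 * (Real.cos (x / Real.sqrt n) - 1)) / 3)) atTop
      (nhds (-(1 / 3) * x ^ 2)) := by
    have h4 : Tendsto (fun n : ℕ => -(1 / 3) * x ^ 2 * (Real.sinc (x / Real.sqrt n / 2)) ^ 2) atTop
      (nhds (-(1 / 3) * x ^ 2)) := by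
      have h6 := (h1.pow 2).const_mul (-(1 / 3) * x ^ 2)
      rwa [one_pow, mul_one] at h6
    refine h4.congr' ?_
    filter_upwards [eventually_gt_atTop 0] with n hn
    have hn' : (0 : ℝ) < n := by exact_mod_cast hn
    have hs := Real.sq_sqrt hn'.le
    have hs0 : Real.sqrt n ≠ 0 := (Real.sqrt_pos.mpr hn').ne'
    have e : Real.cos (x / Real.sqrt n) - 1 = -2 * Real.sin (x / Real.sqrt n / 2) ^ 2 := by
      have := Real.cos_two_mul (x / Real.sqrt n / 2)
      rw [mul_div_cancel₀ _ (two_ne_zero)] at this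
      have h := Real.sin_sq_add_cos_sq (x / Real.sqrt n / 2)
      linarith
    rw [e, h2, mul_pow, div_pow, div_pow, hs]
    field_simp
  have h5 := Real.tendsto_one_add_pow_exp_of_tendsto h3
  refine h5.congr fun n => ?_
  congr 1
  ring

lemma aux_lim :
    Tendsto (fun n : ℕ => ∫ x : ℝ, (Set.Ioc (-Real.pi * Real.sqrt n) (Real.pi * Real.sqrt n)).indicator
      (fun x => ((1 + 2 * Real.cos (x / Real.sqrt n)) / 3) ^ n) x) atTop
      (nhds (Real.sqrt (Real.pi / (1 / 3)))) := by
  rw [← integral_gaussian]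
  have hpi := Real.pi_pos
  apply MeasureTheory.tendsto_integral_of_dominated_convergence
    (fun x => Real.exp (-(1 / Real.pi ^ 2) * x ^ 2))
  · intro n
    apply Measurable.aestronglyMeasurable
    refine Measurable.indicator ?_ measurableSet_Ioc
    fun_prop
  · exact integrable_exp_neg_mul_sq (by positivity)
  · intro n
    refine Eventually.of_forall fun x => ?_
    by_cases hx : x ∈ Set.Ioc (-Real.pi * Real.sqrt n) (Real.pi * Real.sqrt n)
    · rw [Set.indicator_of_mem hx]
      have hs0 : 0 < Real.sqrt n := by
        by_contra hh
        have : Real.sqrt n = 0 := le_antisymm (not_lt.mp hh) (Real.sqrt_nonneg _)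
        rw [this] at hx
        simp at hx
      have hn' : (0 : ℝ) < n := Real.sqrt_pos.mp hs0
      have hs := Real.sq_sqrt hn'.le
      have hb := aux_bound (x / Real.sqrt n) (by
        rw [abs_le, le_div_iff₀ hs0, div_le_iff₀ hs0]
        exact ⟨hx.1.le, hx.2⟩)
      rw [norm_pow, Real.norm_eq_abs]
      refine (pow_le_pow_left₀ (abs_nonneg _) hb n).trans (le_of_eq ?_)
      rw [← Real.exp_nat_mul, div_pow, hs]
      congr 1
      field_simp
    · rw [Set.indicator_of_notMem hx]
      simp [Real.exp_nonneg]
  · refine Eventually.of_forall fun x => ?_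
    refine (aux_ptwise x).congr' ?_
    have ht : Tendsto (fun n : ℕ => Real.pi * Real.sqrt n) atTop atTop :=
      (Real.tendsto_sqrt_atTop.comp tendsto_natCast_atTop_atTop).const_mul_atTop hpi
    filter_upwards [ht.eventually_gt_atTop |x|] with n hn
    rw [Set.indicator_of_mem]
    have := abs_lt.mp hn
    exact ⟨by linarith, this.2.le⟩

/-- With T n the number of sequences in {−1,0,1}^n summing to 0,
T_n · √n / 3^n → √3/(2√π) as n → ∞. -/
theorem stmt_13 (T : ℕ → ℕ)
    (hT : ∀ n, T n = Set.ncard {a : Fin n → ℤ |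
        (∀ i, a i = -1 ∨ a i = 0 ∨ a i = 1) ∧ (∑ i, a i) = 0}) :
    Tendsto (fun n : ℕ => (T n : ℝ) * Real.sqrt n / 3 ^ n)
      atTop (nhds (Real.sqrt 3 / (2 * Real.sqrt Real.pi))) := by
  have hpi := Real.pi_pos
  have h := aux_lim.div_const (2 * Real.pi)
  have e : Real.sqrt (Real.pi / (1 / 3)) / (2 * Real.pi) =
      Real.sqrt 3 / (2 * Real.sqrt Real.pi) := by
    have e1 : Real.pi / (1 / 3) = 3 * Real.pi := by ring
    rw [e1, Real.sqrt_mul (by norm_num)]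
    have hs := Real.mul_self_sqrt hpi.le
    have hs0 := Real.sqrt_pos.mpr hpi
    rw [div_eq_div_iff (by positivity) (by positivity)]
    linear_combination 2 * Real.sqrt 3 * hs
  rw [e] at h
  refine h.congr' ?_
  filter_upwards [eventually_gt_atTop 0] with n hn
  have hn' : (0 : ℝ) < n := by exact_mod_cast hn
  have hs0 : Real.sqrt n ≠ 0 := (Real.sqrt_pos.mpr hn').ne'
  have hle : -Real.pi * Real.sqrt n ≤ Real.pi * Real.sqrt n := by
    have := Real.sqrt_nonneg n
    nlinarith
  rw [MeasureTheory.integral_indicator measurableSet_Ioc,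
    ← intervalIntegral.integral_of_le hle,
    intervalIntegral.integral_comp_div (fun y => ((1 + 2 * Real.cos y) / 3) ^ n) hs0,
    mul_div_cancel_right₀ _ hs0, mul_div_cancel_right₀ _ hs0]
  simp_rw [div_pow]
  rw [intervalIntegral.integral_div, aux_count, ← hT, smul_eq_mul]
  field_simp
end

section
/- Fix an integer s ≥ 1 and for j ∈ {0, 1} let A_n(j) denote the number of sequences (a₁, …, a_n) with each a_i an integer satisfying −s ≤ a_i ≤ s and a₁ + ⋯ + a_n = j. Then (A_n(0) − A_n(1)) · n^{3/2} / (2s+1)^n converges to 3√6/(4√π·(s(s+1))^{3/2}) as n → ∞. -/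
open Filter

namespace SpinWalk

open Finset MeasureTheory

/-- Dirichlet kernel. -/
noncomputable def D (s : ℕ) (t : ℝ) : ℝ := 1 + 2 * ∑ k ∈ range s, Real.cos (((k : ℝ) + 1) * t)

lemma sum_Icc_symm {M : Type*} [AddCommMonoid M] (f : ℤ → M) (s : ℕ) :
    ∑ k ∈ Icc (-(s : ℤ)) s, f k
      = f 0 + ∑ k ∈ range s, (f ((k : ℤ) + 1) + f (-((k : ℤ) + 1))) := by
  induction s with
  | zero => simp
  | succ s ih =>
    have h : Icc (-((s + 1 : ℕ) : ℤ)) ((s + 1 : ℕ) : ℤ)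
        = insert ((s : ℤ) + 1) (insert (-((s : ℤ) + 1)) (Icc (-(s : ℤ)) s)) := by
      ext x
      simp only [Finset.mem_insert, Finset.mem_Icc]
      push_cast
      omega
    rw [h, sum_insert, sum_insert, ih, sum_range_succ]
    · abel
    · simp
    · simp only [Finset.mem_insert, Finset.mem_Icc]
      omega

lemma D_eq (s : ℕ) (t : ℝ) :
    ∑ k ∈ Icc (-(s : ℤ)) s, Complex.exp ((k : ℂ) * t * Complex.I) = (D s t : ℂ) := by
  rw [sum_Icc_symm, D]
  push_cast
  rw [mul_sum]
  congr 1
  · simp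
  · refine sum_congr rfl fun k _ => ?_
    rw [Complex.cos]
    have : -((k : ℂ) + 1) * t * Complex.I = -(((k : ℂ) + 1) * t) * Complex.I := by ring
    rw [this]
    ring

lemma D_pow_mul_cos (s n : ℕ) (j : ℤ) (t : ℝ) :
    D s t ^ n * Real.cos ((j : ℝ) * t)
      = ∑ a ∈ Fintype.piFinset (fun _ : Fin n => Icc (-(s : ℤ)) s),
          Real.cos ((((∑ i, a i) - j : ℤ) : ℝ) * t) := by
  have h : ((D s t ^ n : ℝ) : ℂ) * Complex.exp (((-(j * t) : ℝ) : ℂ) * Complex.I)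
      = ∑ a ∈ Fintype.piFinset (fun _ : Fin n => Icc (-(s : ℤ)) s),
          Complex.exp ((((((∑ i, a i) - j : ℤ) : ℝ) * t : ℝ) : ℂ) * Complex.I) := by
    push_cast
    rw [← D_eq, sum_pow', sum_mul]
    refine sum_congr rfl fun a _ => ?_
    rw [← Complex.exp_sum, ← Complex.exp_add]
    congr 1
    rw [← sum_mul, ← sum_mul]
    ring
  have h2 := congrArg Complex.re h
  rw [Complex.re_ofReal_mul, Complex.exp_ofReal_mul_I_re, Complex.re_sum, Real.cos_neg] at h2
  rw [h2]
  exact sum_congr rfl fun a _ => Complex.exp_ofReal_mul_I_re _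

lemma integral_cos_int (m : ℤ) :
    ∫ t in (0 : ℝ)..Real.pi, Real.cos ((m : ℝ) * t) = if m = 0 then Real.pi else 0 := by
  split_ifs with h
  · simp [h]
  · have hm : (m : ℝ) ≠ 0 := by exact_mod_cast h
    rw [intervalIntegral.integral_comp_mul_left _ hm]
    simp [Real.sin_int_mul_pi]

lemma continuous_D (s : ℕ) : Continuous (D s) := by
  unfold D; fun_prop

lemma count (s n : ℕ) (j : ℤ) :
    ∫ t in (0 : ℝ)..Real.pi, D s t ^ n * Real.cos ((j : ℝ) * t)
      = Real.pi * (Set.ncard {a : Fin n → ℤ |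
        (∀ i, -(s : ℤ) ≤ a i ∧ a i ≤ (s : ℤ)) ∧ (∑ i, a i) = j} : ℝ) := by
  have hset : {a : Fin n → ℤ | (∀ i, -(s : ℤ) ≤ a i ∧ a i ≤ (s : ℤ)) ∧ (∑ i, a i) = j}
      = (((Fintype.piFinset (fun _ : Fin n => Icc (-(s : ℤ)) s)).filter
          (fun a => (∑ i, a i) = j) : Finset (Fin n → ℤ)) : Set (Fin n → ℤ)) := by
    ext a; simp
  rw [hset, Set.ncard_coe_finset]
  simp_rw [D_pow_mul_cos]
  rw [intervalIntegral.integral_finsetSum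
    (fun i _ => Continuous.intervalIntegrable (by fun_prop) _ _)]
  simp_rw [integral_cos_int, sub_eq_zero]
  rw [← sum_filter, sum_const, nsmul_eq_mul, mul_comm]

lemma D_bound (s : ℕ) (hs : 1 ≤ s) (t : ℝ) (ht : |t| ≤ Real.pi) :
    |D s t / (2 * s + 1)| ≤ Real.exp (-(2 / ((2 * s + 1) * Real.pi ^ 2)) * t ^ 2) := by
  have hp := Real.pi_pos
  have hpos : (0 : ℝ) < 2 * s + 1 := by positivity
  have h1 := Real.cos_le_one_sub_mul_cos_sq ht
  have hx : t ^ 2 ≤ Real.pi ^ 2 := sq_le_sq' (abs_le.mp ht).1 (abs_le.mp ht).2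
  set w := t ^ 2 / Real.pi ^ 2 with hw
  have hw0 : 0 ≤ w := by positivity
  have hw1 : w ≤ 1 := by rw [hw, div_le_one (by positivity)]; exact hx
  have h1' : Real.cos t ≤ 1 - 2 * w := by
    convert h1 using 1; rw [hw]; ring
  have hup : D s t ≤ 2 * s + 1 - 4 * w := by
    obtain ⟨r, rfl⟩ : ∃ r, s = r + 1 := ⟨s - 1, by omega⟩
    rw [D, sum_range_succ']
    have : ∑ k ∈ range r, Real.cos ((((k + 1 : ℕ) : ℝ) + 1) * t) ≤ r := by
      calc _ ≤ ∑ k ∈ range r, (1 : ℝ) := sum_le_sum fun k _ => Real.cos_le_one _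
        _ = r := by simp
    simp only [Nat.cast_zero, zero_add, one_mul]
    push_cast at this ⊢
    linarith
  have hlo : 1 - 2 * (s : ℝ) ≤ D s t := by
    rw [D]
    have : -(s : ℝ) ≤ ∑ k ∈ range s, Real.cos (((k : ℝ) + 1) * t) := by
      calc -(s : ℝ) = ∑ k ∈ range s, (-1 : ℝ) := by simp
        _ ≤ _ := sum_le_sum fun k _ => Real.neg_one_le_cos _
    linarith
  have hkey : |D s t / (2 * s + 1)| ≤ 1 - 2 * w / (2 * s + 1) := by
    rw [abs_div, abs_of_pos hpos, div_le_iff₀ hpos, sub_mul, div_mul_cancel₀ _ hpos.ne', abs_le]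
    constructor <;> linarith
  refine hkey.trans ?_
  have := Real.add_one_le_exp (-(2 / ((2 * s + 1) * Real.pi ^ 2)) * t ^ 2)
  refine le_trans (le_of_eq ?_) this
  rw [hw]; field_simp; ring

lemma tendsto_one_sub_cos (a : ℝ) :
    Tendsto (fun n : ℕ => (n : ℝ) * (1 - Real.cos (a / √(n : ℝ)))) atTop (nhds (a ^ 2 / 2)) := by
  have h0 : Tendsto (fun n : ℕ => a / √(n : ℝ) / 2) atTop (nhds 0) := by
    have : Tendsto (fun n : ℕ => √(n : ℝ)) atTop atTop :=
      Real.tendsto_sqrt_atTop.comp tendsto_natCast_atTop_atTop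
    simpa using (this.const_div_atTop a).div_const 2
  have h1 : Tendsto (fun n : ℕ => a ^ 2 / 2 * Real.sinc (a / √(n : ℝ) / 2) ^ 2) atTop
      (nhds (a ^ 2 / 2)) := by
    have := ((Real.continuous_sinc.tendsto 0).comp h0)
    simpa using (this.pow 2).const_mul (a ^ 2 / 2)
  refine h1.congr' ?_
  filter_upwards [eventually_gt_atTop 0] with n hn
  have hn' : (0 : ℝ) < n := by exact_mod_cast hn
  have hq : 0 < √(n : ℝ) := Real.sqrt_pos.mpr hn'
  have hsq : √(n : ℝ) ^ 2 = n := Real.sq_sqrt hn'.le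
  rcases eq_or_ne a 0 with rfl | ha
  · simp
  have hx : a / √(n : ℝ) / 2 ≠ 0 := by positivity
  have hc : Real.cos (a / √(n : ℝ)) = 1 - 2 * Real.sin (a / √(n : ℝ) / 2) ^ 2 := by
    have := Real.cos_two_mul (a / √(n : ℝ) / 2)
    rw [Real.cos_sq', mul_div_cancel₀ _ (two_ne_zero)] at this
    rw [this]; ring
  rw [hc, Real.sinc_of_ne_zero hx, div_pow]
  field_simp
  rw [hsq]; ring

lemma sum_sq (s : ℕ) : ∑ k ∈ range s, ((k : ℝ) + 1) ^ 2 = (s : ℝ) * (s + 1) * (2 * s + 1) / 6 := by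
  induction s with
  | zero => simp
  | succ s ih => rw [sum_range_succ, ih]; push_cast; ring

lemma tendsto_D (s : ℕ) (u : ℝ) :
    Tendsto (fun n : ℕ => (D s (u / √(n : ℝ)) / (2 * s + 1)) ^ n) atTop
      (nhds (Real.exp (-((s : ℝ) * (s + 1) / 6) * u ^ 2))) := by
  have hpos : (0 : ℝ) < 2 * s + 1 := by positivity
  have hg : Tendsto (fun n : ℕ => (n : ℝ) * (D s (u / √(n : ℝ)) / (2 * s + 1) - 1)) atTop
      (nhds (-((s : ℝ) * (s + 1) / 6) * u ^ 2)) := by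
    have h := (tendsto_finsetSum (range s)
      (fun k _ => tendsto_one_sub_cos (((k : ℝ) + 1) * u))).const_mul (-2 / (2 * (s : ℝ) + 1))
    have e : -2 / (2 * (s : ℝ) + 1) * ∑ k ∈ range s, (((k : ℝ) + 1) * u) ^ 2 / 2
        = -((s : ℝ) * (s + 1) / 6) * u ^ 2 := by
      simp_rw [mul_pow]
      rw [← sum_div, ← sum_mul, sum_sq]
      field_simp
    rw [e] at h
    refine h.congr fun n => ?_
    rw [← mul_sum, sum_sub_distrib, D]
    simp only [sum_const, card_range, nsmul_eq_mul, mul_one, mul_div_assoc]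
    generalize ∑ k ∈ range s, Real.cos (((k : ℝ) + 1) * (u / √(n : ℝ))) = S
    field_simp
    ring
  simpa using Real.tendsto_one_add_pow_exp_of_tendsto hg

lemma gauss_integral (b : ℝ) (hb : 0 < b) :
    ∫ u in Set.Ioi (0 : ℝ), Real.exp (-b * u ^ 2) * (u ^ 2 / 2)
      = √Real.pi / 8 / b ^ ((3 : ℝ) / 2) := by
  have h := integral_rpow_mul_exp_neg_mul_rpow (p := 2) (q := 2) (b := b)
    (by norm_num) (by norm_num) hb
  have hG : Real.Gamma (3 / 2) = √Real.pi / 2 := by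
    have := Real.Gamma_add_one (s := 1 / 2) (by norm_num)
    rw [Real.Gamma_one_half_eq] at this
    norm_num at this ⊢
    rw [this]; ring
  have e : (fun u : ℝ => Real.exp (-b * u ^ 2) * (u ^ 2 / 2))
      = fun u : ℝ => (1 / 2) * (u ^ (2 : ℝ) * Real.exp (-b * u ^ (2 : ℝ))) := by
    ext u; simp only [Real.rpow_two]; ring
  rw [e, integral_const_mul, h]
  norm_num
  rw [hG, Real.rpow_neg hb.le]
  field_simp
  try ring

lemma main_limit (s : ℕ) (hs : 1 ≤ s) :
    Tendsto (fun n : ℕ => ∫ u in Set.Ioi (0 : ℝ),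
      (Set.Ioc (0 : ℝ) (√(n : ℝ) * Real.pi)).indicator
        (fun u => (D s (u / √(n : ℝ)) / (2 * s + 1)) ^ n
          * ((n : ℝ) * (1 - Real.cos (u / √(n : ℝ))))) u) atTop
      (nhds (√Real.pi / 8 / ((s : ℝ) * (s + 1) / 6) ^ ((3 : ℝ) / 2))) := by
  have hs' : (0 : ℝ) < s := by exact_mod_cast hs
  have hc : 0 < 2 / ((2 * (s : ℝ) + 1) * Real.pi ^ 2) := by positivity
  set c := 2 / ((2 * (s : ℝ) + 1) * Real.pi ^ 2) with hcdef
  rw [← gauss_integral _ (by positivity)]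
  apply tendsto_integral_of_dominated_convergence
    (fun u => (1 / 2) * (u ^ (2 : ℝ) * Real.exp (-c * u ^ 2)))
  · intro n
    have := continuous_D s
    apply Measurable.aestronglyMeasurable
    refine Measurable.indicator ?_ measurableSet_Ioc
    exact Continuous.measurable (by fun_prop)
  · exact (integrableOn_rpow_mul_exp_neg_mul_sq hc (by norm_num)).const_mul _
  · intro n
    refine Eventually.of_forall fun u => ?_
    rw [Real.rpow_two]
    by_cases hu : u ∈ Set.Ioc (0 : ℝ) (√(n : ℝ) * Real.pi)
    · rw [Set.indicator_of_mem hu]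
      have hq : 0 < √(n : ℝ) := by
        by_contra hq
        have : √(n : ℝ) = 0 := le_antisymm (not_lt.mp hq) (Real.sqrt_nonneg _)
        rw [this] at hu
        simp at hu
      have hn' : (0 : ℝ) < n := Real.sqrt_pos.mp hq
      have hsq : √(n : ℝ) ^ 2 = n := Real.sq_sqrt hn'.le
      have ht : |u / √(n : ℝ)| ≤ Real.pi := by
        rw [abs_of_pos (div_pos hu.1 hq), div_le_iff₀ hq, mul_comm]
        exact hu.2
      have hD := D_bound s hs _ ht
      have hcos := Real.one_sub_sq_div_two_le_cos (x := u / √(n : ℝ))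
      have hcos1 := Real.cos_le_one (u / √(n : ℝ))
      rw [norm_mul, norm_pow, Real.norm_eq_abs, Real.norm_eq_abs,
        abs_of_nonneg (mul_nonneg hn'.le (sub_nonneg.mpr hcos1))]
      have h1 : |D s (u / √(n : ℝ)) / (2 * s + 1)| ^ n ≤ Real.exp (-c * u ^ 2) := by
        calc _ ≤ _ := pow_le_pow_left₀ (abs_nonneg _) hD n
          _ = _ := by
            rw [← Real.exp_nat_mul, div_pow, hsq]
            congr 1
            rw [hcdef]
            field_simp
      have h2 : (n : ℝ) * (1 - Real.cos (u / √(n : ℝ))) ≤ u ^ 2 / 2 := by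
        calc _ ≤ (n : ℝ) * ((u / √(n : ℝ)) ^ 2 / 2) := by
              apply mul_le_mul_of_nonneg_left _ hn'.le
              linarith
          _ = _ := by rw [div_pow, hsq]; field_simp
      calc _ ≤ Real.exp (-c * u ^ 2) * (u ^ 2 / 2) :=
            mul_le_mul h1 h2 (mul_nonneg hn'.le (sub_nonneg.mpr hcos1)) (Real.exp_pos _).le
        _ = _ := by ring
    · rw [Set.indicator_of_notMem hu, norm_zero]
      positivity
  · refine (ae_restrict_iff' measurableSet_Ioi).mpr (Eventually.of_forall fun u hu => ?_)
    refine ((tendsto_D s u).mul (tendsto_one_sub_cos u)).congr' ?_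
    have : Tendsto (fun n : ℕ => √(n : ℝ) * Real.pi) atTop atTop :=
      (Real.tendsto_sqrt_atTop.comp tendsto_natCast_atTop_atTop).atTop_mul_const Real.pi_pos
    filter_upwards [this.eventually_ge_atTop u] with n hn
    rw [Set.indicator_of_mem (show u ∈ Set.Ioc (0 : ℝ) (√(n : ℝ) * Real.pi) from ⟨hu, hn⟩)]

lemma rescale (s n : ℕ) (hn : 0 < n) :
    ∫ u in Set.Ioi (0 : ℝ),
      (Set.Ioc (0 : ℝ) (√(n : ℝ) * Real.pi)).indicator
        (fun u => (D s (u / √(n : ℝ)) / (2 * s + 1)) ^ n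
          * ((n : ℝ) * (1 - Real.cos (u / √(n : ℝ))))) u
    = √(n : ℝ) * n / (2 * s + 1) ^ n *
        ∫ t in (0 : ℝ)..Real.pi, D s t ^ n * (1 - Real.cos t) := by
  have hn' : (0 : ℝ) < n := by exact_mod_cast hn
  have hq : 0 < √(n : ℝ) := Real.sqrt_pos.mpr hn'
  rw [setIntegral_indicator measurableSet_Ioc,
    Set.inter_eq_right.mpr (fun x hx => hx.1),
    ← intervalIntegral.integral_of_le (by positivity)]
  rw [intervalIntegral.integral_comp_div
    (fun t => (D s t / (2 * s + 1)) ^ n * ((n : ℝ) * (1 - Real.cos t))) hq.ne']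
  rw [zero_div, mul_div_cancel_left₀ _ hq.ne', smul_eq_mul,
    ← intervalIntegral.integral_const_mul, ← intervalIntegral.integral_const_mul]
  refine intervalIntegral.integral_congr fun t _ => ?_
  simp only [div_pow]
  ring

end SpinWalk

/-- For fixed integer s ≥ 1, with A_n(j) the number of sequences in {−s,…,s}^n summing
to j, (A_n(0) − A_n(1)) · n^{3/2} / (2s+1)^n → 3√6/(4√π·(s(s+1))^{3/2}) as n → ∞. -/
theorem stmt_16 (s : ℕ) (hs : 1 ≤ s) (A : ℕ → ℤ → ℕ)
    (hA : ∀ n j, A n j = Set.ncard {a : Fin n → ℤ |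
        (∀ i, -(s : ℤ) ≤ a i ∧ a i ≤ (s : ℤ)) ∧ (∑ i, a i) = j}) :
    Tendsto (fun n : ℕ =>
        ((A n 0 : ℝ) - (A n 1 : ℝ)) * (n : ℝ) ^ ((3 : ℝ) / 2) / (2 * (s : ℝ) + 1) ^ n)
      atTop
      (nhds (3 * Real.sqrt 6 /
        (4 * Real.sqrt Real.pi * ((s : ℝ) * ((s : ℝ) + 1)) ^ ((3 : ℝ) / 2)))) := by
  have hs' : (0 : ℝ) < s := by exact_mod_cast hs
  have hp := Real.pi_pos
  have h32 : ∀ x : ℝ, 0 < x → x ^ ((3 : ℝ) / 2) = √x * x := by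
    intro x hx
    rw [show (3 : ℝ) / 2 = 1 / 2 + 1 by norm_num, Real.rpow_add hx, Real.rpow_one,
      ← Real.sqrt_eq_rpow]
  have h := (SpinWalk.main_limit s hs).div_const Real.pi
  have e : √Real.pi / 8 / ((s : ℝ) * (s + 1) / 6) ^ ((3 : ℝ) / 2) / Real.pi
      = 3 * Real.sqrt 6 /
        (4 * Real.sqrt Real.pi * ((s : ℝ) * ((s : ℝ) + 1)) ^ ((3 : ℝ) / 2)) := by
    have hq : 0 < √Real.pi := Real.sqrt_pos.mpr hp
    have hsq : √Real.pi ^ 2 = Real.pi := Real.sq_sqrt hp.le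
    have hX : 0 < ((s : ℝ) * ((s : ℝ) + 1)) ^ ((3 : ℝ) / 2) := by positivity
    rw [Real.div_rpow (by positivity) (by norm_num), h32 6 (by norm_num)]
    set X := ((s : ℝ) * ((s : ℝ) + 1)) ^ ((3 : ℝ) / 2)
    field_simp
    rw [hsq]
    ring
  rw [e] at h
  refine h.congr' ?_
  filter_upwards [eventually_gt_atTop 0] with n hn
  have hn' : (0 : ℝ) < n := by exact_mod_cast hn
  rw [SpinWalk.rescale s n hn, h32 _ hn']
  have hc0 := SpinWalk.count s n 0
  have hc1 := SpinWalk.count s n 1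
  rw [← hA] at hc0 hc1
  have hcont := SpinWalk.continuous_D s
  have hI : ∫ t in (0 : ℝ)..Real.pi, SpinWalk.D s t ^ n * (1 - Real.cos t)
      = Real.pi * ((A n 0 : ℝ) - A n 1) := by
    rw [mul_sub, ← hc0, ← hc1, ← intervalIntegral.integral_sub
      (Continuous.intervalIntegrable (by fun_prop) _ _)
      (Continuous.intervalIntegrable (by fun_prop) _ _)]
    refine intervalIntegral.integral_congr fun t _ => ?_
    simp
    ring
  rw [hI]
  field_simp
end

section
/- Fix an integer s ≥ 1 and natural numbers n and j. The number of sequences (x₀, x₁, …, x_n) of natural numbers with x₀ = 0, x_n = j, and for every 0 ≤ i < n both |x_{i+1} − x_i| ≤ s and x_i + x_{i+1} ≥ s, equals A_n(j) − A_n(j+1), where A_n(m) is the number of sequences (a₁, …, a_n) with each a_i an integer satisfying −s ≤ a_i ≤ s and a₁ + ⋯ + a_n = m. -/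
/-- Counting a set that is a disjoint union of injective images. -/
theorem aux_count_s17 {ι α β : Type*} (T : Finset ι) (R : ι → Set α) (f : ι → α → β) (S : Set β)
    (hfin : ∀ t, (R t).Finite)
    (hinj : ∀ t t' a a', a ∈ R t → a' ∈ R t' → f t a = f t' a' → t = t' ∧ a = a')
    (hS : ∀ b, b ∈ S ↔ ∃ t ∈ T, ∃ a ∈ R t, f t a = b) :
    S.Finite ∧ S.ncard = ∑ t ∈ T, (R t).ncard := by
  classical
  have e : S = ((T.biUnion fun t => (hfin t).toFinset.image (f t) : Finset β) : Set β) := by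
    ext b
    rw [hS]
    simp
  refine ⟨e ▸ Finset.finite_toSet _, ?_⟩
  rw [e, Set.ncard_coe_finset, Finset.card_biUnion]
  · refine Finset.sum_congr rfl fun t _ => ?_
    rw [Finset.card_image_of_injOn, Set.ncard_eq_toFinset_card _ (hfin t)]
    intro a ha a' ha' h
    exact (hinj t t a a' (by simpa using ha) (by simpa using ha') h).2
  · intro t _ t' _ hne
    rw [Function.onFun, Finset.disjoint_left]
    intro b hb hb'
    simp only [Finset.mem_image, Set.Finite.mem_toFinset] at hb hb'
    obtain ⟨a, ha, rfl⟩ := hb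
    obtain ⟨a', ha', h⟩ := hb'
    exact hne (hinj t t' a a' ha ha' h.symm).1

/-- Unconstrained step sequences. -/
def auxA (s N : ℕ) (m : ℤ) : Set (Fin N → ℤ) :=
  {a | (∀ i, -(s : ℤ) ≤ a i ∧ a i ≤ (s : ℤ)) ∧ (∑ i, a i) = m}

/-- Walks with a mirror. -/
def auxW (s n j : ℕ) : Set (Fin (n + 1) → ℕ) :=
  {x | x 0 = 0 ∧ x (Fin.last n) = j ∧
        ∀ i : Fin n,
          x i.succ ≤ x i.castSucc + s ∧
          x i.castSucc ≤ x i.succ + s ∧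
          s ≤ x i.castSucc + x i.succ}

theorem auxA_fin (s N : ℕ) (m : ℤ) : (auxA s N m).Finite := by
  refine (Set.Finite.pi' (fun _ : Fin N => Set.finite_Icc (-(s : ℤ)) s)).subset ?_
  intro a ha i
  exact ha.1 i

theorem auxA_succ (s N : ℕ) (m : ℤ) :
    (auxA s (N + 1) m).ncard = ∑ i ∈ Finset.range (2 * s + 1), (auxA s N (m - s + i)).ncard := by
  refine (aux_count_s17 (Finset.range (2 * s + 1)) (fun i : ℕ => auxA s N (m - s + i))
    (fun i a => (Fin.cons ((s : ℤ) - i) a : Fin (N + 1) → ℤ)) _ (fun _ => auxA_fin _ _ _) ?_ ?_).2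
  · intro t t' a a' _ _ h
    obtain ⟨h1, h2⟩ := Fin.cons_injective2 h
    exact ⟨by omega, h2⟩
  · intro b
    constructor
    · rintro ⟨h1, h2⟩
      rw [Fin.sum_univ_succ] at h2
      have h0 := h1 0
      refine ⟨(s - b 0).toNat, by simp; omega, Fin.tail b, ⟨fun i => h1 i.succ, ?_⟩, ?_⟩
      · simp only [Fin.tail]
        omega
      · have : (s : ℤ) - ((s - b 0).toNat : ℤ) = b 0 := by omega
        simp only [this, Fin.cons_self_tail]
    · rintro ⟨t, ht, a, ⟨h1, h2⟩, rfl⟩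
      rw [Finset.mem_range] at ht
      refine ⟨fun i => ?_, ?_⟩
      · refine Fin.cases ?_ (fun i => ?_) i
        · simp only [Fin.cons_zero]; omega
        · simpa using h1 i
      · rw [Fin.sum_univ_succ]
        simp only [Fin.cons_zero, Fin.cons_succ]
        omega

theorem auxA_neg (s N : ℕ) (m : ℤ) : (auxA s N (-m)).ncard = (auxA s N m).ncard := by
  refine Set.ncard_congr (fun a _ => -a) ?_ ?_ ?_
  · rintro a ⟨h1, h2⟩
    refine ⟨fun i => ?_, ?_⟩
    · have := h1 i
      simp only [Pi.neg_apply]; omega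
    · simp [h2]
  · intro a b _ _ h
    exact neg_injective h
  · rintro a ⟨h1, h2⟩
    refine ⟨-a, ⟨fun i => ?_, ?_⟩, by simp⟩
    · have := h1 i
      simp only [Pi.neg_apply]; omega
    · simp [h2]

theorem auxW_succ (s n j : ℕ) (hfin : ∀ p, (auxW s n p).Finite) :
    (auxW s (n + 1) j).Finite ∧ (auxW s (n + 1) j).ncard =
      ∑ i ∈ Finset.range (j + s + 1 - ((j - s) + (s - j))),
        (auxW s n ((j - s) + (s - j) + i)).ncard := by
  refine aux_count_s17 _ (fun i : ℕ => auxW s n ((j - s) + (s - j) + i))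
    (fun _ a => (Fin.snoc a j : Fin (n + 1 + 1) → ℕ)) _ (fun _ => hfin _) ?_ ?_
  · intro t t' a a' h h' e
    obtain ⟨rfl, -⟩ := Fin.snoc_injective2 e
    have h1 := h.2.1
    have h2 := h'.2.1
    exact ⟨by omega, rfl⟩
  · intro b
    constructor
    · rintro ⟨h0, h1, h2⟩
      have hl := h2 (Fin.last n)
      rw [Fin.succ_last, h1] at hl
      refine ⟨b (Fin.last n).castSucc - ((j - s) + (s - j)), by rw [Finset.mem_range]; omega,
        Fin.init b, ⟨h0, ?_, fun i => h2 i.castSucc⟩, ?_⟩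
      · simp only [Fin.init]; omega
      · rw [← h1]; exact Fin.snoc_init_self b
    · rintro ⟨t, ht, a, ⟨h0, h1, h2⟩, rfl⟩
      rw [Finset.mem_range] at ht
      refine ⟨?_, by simp, fun i => ?_⟩
      · rw [← Fin.castSucc_zero, Fin.snoc_castSucc]; exact h0
      · refine Fin.lastCases ?_ (fun i => ?_) i
        · rw [Fin.succ_last, Fin.snoc_last, Fin.snoc_castSucc]; omega
        · rw [Fin.succ_castSucc, Fin.snoc_castSucc, Fin.snoc_castSucc]
          exact h2 i

theorem aux_main (s n : ℕ) : ∀ j : ℕ, (auxW s n j).Finite ∧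
    ((auxW s n j).ncard : ℤ) = (auxA s n j).ncard - (auxA s n (j + 1)).ncard := by
  induction n with
  | zero =>
    intro j
    have hA : ∀ m : ℤ, (auxA s 0 m).ncard = if m = 0 then 1 else 0 := by
      intro m
      split_ifs with h
      · rw [Set.ncard_eq_one]
        exact ⟨0, by ext a; simp [auxA, h, Subsingleton.elim a 0]⟩
      · have : auxA s 0 m = ∅ := by
          ext a; simp [auxA, Ne.symm h]
        simp [this]
    have hW : auxW s 0 j = if j = 0 then {0} else ∅ := by
      ext a
      split_ifs with h
      · constructor
        · rintro ⟨h0, -⟩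
          ext i
          rw [show i = 0 from Fin.ext (by simp)]; exact h0
        · rintro rfl
          exact ⟨rfl, h.symm, fun i => i.elim0⟩
      · simp only [Set.mem_empty_iff_false, iff_false]
        rintro ⟨h0, h1, -⟩
        exact h (h1.symm.trans h0)
    rw [hW, hA, hA]
    have : ¬ ((j : ℤ) + 1 = 0) := by omega
    by_cases h : j = 0 <;> simp [h, this]
  | succ n ih =>
    intro j
    obtain ⟨h1, h2⟩ := auxW_succ s n j (fun p => (ih p).1)
    refine ⟨h1, ?_⟩
    rw [h2, auxA_succ, auxA_succ]
    push_cast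
    rw [← Finset.sum_sub_distrib]
    rw [Finset.sum_congr rfl (fun i _ => (ih _).2)]
    have e1 := Finset.sum_range_sub' (fun i : ℕ =>
      ((auxA s n (((j - s) + (s - j) + i : ℕ) : ℤ)).ncard : ℤ))
      (j + s + 1 - ((j - s) + (s - j)))
    have e2 := Finset.sum_range_sub' (fun i : ℕ =>
      ((auxA s n ((j : ℤ) - s + i)).ncard : ℤ)) (2 * s + 1)
    have e3 : (auxA s n (((j - s) + (s - j) + 0 : ℕ) : ℤ)).ncard
        = (auxA s n ((j : ℤ) - s + (0 : ℕ))).ncard := by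
      rcases le_total s j with h | h
      · congr 2; omega
      · rw [← auxA_neg]; congr 2; omega
    have e4 : (((j - s) + (s - j) + (j + s + 1 - ((j - s) + (s - j))) : ℕ) : ℤ)
        = (j : ℤ) - s + (2 * s + 1 : ℕ) := by omega
    rw [e3, e4, ← e2] at e1
    refine Eq.trans (Finset.sum_congr rfl fun i _ => ?_) (e1.trans
      (Finset.sum_congr rfl fun i _ => ?_))
    · push_cast; simp only [add_assoc]
    · congr 4; push_cast; ring


/-- The number of n-step walks on ℕ from 0 to j, where a step from p to q requires
|q − p| ≤ s and p + q ≥ s (mirror at the origin), equals A_n(j) − A_n(j+1), where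
A_n(m) counts sequences in {−s,…,s}^n summing to m. -/
theorem stmt_17 (s : ℕ) (hs : 1 ≤ s) (n j : ℕ) (A : ℕ → ℤ → ℕ)
    (hA : ∀ N m, A N m = Set.ncard {a : Fin N → ℤ |
        (∀ i, -(s : ℤ) ≤ a i ∧ a i ≤ (s : ℤ)) ∧ (∑ i, a i) = m}) :
    (Set.ncard {x : Fin (n + 1) → ℕ |
        x 0 = 0 ∧ x (Fin.last n) = j ∧
        ∀ i : Fin n,
          x i.succ ≤ x i.castSucc + s ∧
          x i.castSucc ≤ x i.succ + s ∧
          s ≤ x i.castSucc + x i.succ} : ℤ) =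
      (A n j : ℤ) - (A n (j + 1) : ℤ) := by
  rw [hA, hA]
  exact (aux_main s n j).2
end

section
/- Fix a natural number j. Then (C(2m, m+j) − C(2m, m+j+1)) · √π · m^{3/2} / 4^m converges to 2j+1 as m → ∞, where C(a,b) denotes the binomial coefficient. -/
open Filter

lemma aux_base : Tendsto (fun m : ℕ => (Nat.choose (2 * m) m : ℝ) *
    Real.sqrt Real.pi * Real.sqrt m / 4 ^ m) atTop (nhds 1) := by
  have h1 : Tendsto (fun m : ℕ => Real.sqrt (Real.pi * ((m : ℝ) / (2 * m + 1)) / Real.Wallis.W m))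
      atTop (nhds (Real.sqrt (Real.pi * (1 / 2) / (Real.pi / 2)))) := by
    refine (Tendsto.div (Stirling.tendsto_self_div_two_mul_self_add_one.const_mul _)
      Real.Wallis.tendsto_W_nhds_pi_div_two (by positivity)).sqrt
  have h2 : Real.sqrt (Real.pi * (1 / 2) / (Real.pi / 2)) = 1 := by
    rw [show Real.pi * (1 / 2) / (Real.pi / 2) = 1 by field_simp, Real.sqrt_one]
  rw [h2] at h1
  refine h1.congr fun m => ?_
  have hc : (Nat.choose (2 * m) m : ℝ) = (Nat.factorial (2 * m) : ℝ) / (Nat.factorial m) ^ 2 := by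
    rw [Nat.cast_choose ℝ (by omega), show 2 * m - m = m by omega, sq]
  have hf : (Nat.factorial (2 * m) : ℝ) ≠ 0 := by positivity
  have hg : (Nat.factorial m : ℝ) ≠ 0 := by positivity
  have h4 : ((2 : ℝ) ^ (4 * m)) = (4 ^ m) ^ 2 := by
    rw [← pow_mul, show (4 : ℝ) = 2 ^ 2 by norm_num, ← pow_mul]; congr 1; ring
  have hm : (0 : ℝ) ≤ m := by positivity
  have hpi := Real.pi_pos.le
  rw [← Real.sqrt_sq (show 0 ≤ (Nat.choose (2 * m) m : ℝ) *
    Real.sqrt Real.pi * Real.sqrt m / 4 ^ m by positivity)]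
  congr 1
  rw [div_pow, mul_pow, mul_pow, Real.sq_sqrt hpi, Real.sq_sqrt hm, hc,
    Real.Wallis.W_eq_factorial_ratio, h4]
  field_simp

lemma aux_step_s18 (j m : ℕ) (h : j ≤ m) : (Nat.choose (2 * m) (m + j + 1) : ℝ) =
    Nat.choose (2 * m) (m + j) * (((m : ℝ) - j) / (m + j + 1)) := by
  have := Nat.choose_succ_right_eq (2 * m) (m + j)
  rw [show 2 * m - (m + j) = m - j by omega] at this
  have h2 : (Nat.choose (2 * m) (m + j + 1) : ℝ) * (m + j + 1) =
      Nat.choose (2 * m) (m + j) * ((m : ℝ) - j) := by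
    rw [← Nat.cast_sub h]; exact_mod_cast this
  have : (m : ℝ) + j + 1 ≠ 0 := by positivity
  field_simp
  linarith

lemma aux_lim_s18 (c : ℝ) : Tendsto (fun m : ℕ => (m : ℝ) / (m + c)) atTop (nhds 1) :=
  tendsto_natCast_div_add_atTop c

lemma aux_inv (c : ℝ) : Tendsto (fun m : ℕ => 1 / ((m : ℝ) + c)) atTop (nhds 0) := by
  simp only [one_div]
  exact tendsto_inv_atTop_zero.comp (tendsto_atTop_add_const_right _ _ tendsto_natCast_atTop_atTop)

lemma aux_all (j : ℕ) : Tendsto (fun m : ℕ => (Nat.choose (2 * m) (m + j) : ℝ) *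
    Real.sqrt Real.pi * Real.sqrt m / 4 ^ m) atTop (nhds 1) := by
  induction j with
  | zero => exact aux_base
  | succ j ih =>
    have h := ih.mul ((aux_lim_s18 ((j : ℝ) + 1)).sub ((aux_inv ((j : ℝ) + 1)).const_mul (j : ℝ)))
    simp only [mul_zero, sub_zero, mul_one] at h
    refine h.congr' ?_
    filter_upwards [eventually_ge_atTop j] with m hm
    rw [← add_assoc, ← add_assoc m j 1, aux_step_s18 j m hm]
    ring

/-- For fixed j, (C(2m, m+j) − C(2m, m+j+1)) · √π · m^{3/2} / 4^m → 2j+1 as m → ∞. -/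
theorem stmt_18 (j : ℕ) :
    Tendsto (fun m : ℕ =>
        ((Nat.choose (2 * m) (m + j) : ℝ) - (Nat.choose (2 * m) (m + j + 1) : ℝ)) *
          Real.sqrt Real.pi * (m : ℝ) ^ ((3 : ℝ) / 2) / 4 ^ m)
      atTop (nhds (2 * (j : ℝ) + 1)) := by
  have h := ((aux_all j).mul (aux_lim_s18 ((j : ℝ) + 1))).const_mul (2 * (j : ℝ) + 1)
  simp only [mul_one] at h
  refine h.congr' ?_
  filter_upwards [eventually_ge_atTop j, eventually_gt_atTop 0] with m hm hm0
  have hp : (0 : ℝ) < m := by exact_mod_cast hm0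
  have hr : (m : ℝ) ^ ((3 : ℝ) / 2) = m * Real.sqrt m := by
    rw [Real.sqrt_eq_rpow, show (3 : ℝ) / 2 = 1 + 1 / 2 by norm_num, Real.rpow_add hp,
      Real.rpow_one]
  rw [aux_step_s18 j m hm, hr]
  have : (m : ℝ) + j + 1 ≠ 0 := by positivity
  have : (m : ℝ) + (j + 1) ≠ 0 := by positivity
  field_simp
  ring
end

section
/- For each natural number m ≥ 1, define d_j := C(2m, m+j) − C(2m, m+j+1) for 0 ≤ j ≤ m, and define E_m := ( Σ_{j=0}^{m} d_j² · log(2j+1) ) / catalan(2m), where catalan(k) = C(2k,k)/(k+1) and log is the natural logarithm. Then E_m / log m converges to 1/2 as m → ∞. -/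
open Filter

lemma V1 (n : ℕ) : ∑ k ∈ Finset.range (n+1), (n.choose k : ℝ)^2 = (n.centralBinom : ℝ) := by
  rw [Nat.centralBinom, two_mul, Nat.add_choose_eq, Finset.Nat.sum_antidiagonal_eq_sum_range_succ_mk]
  push_cast
  refine Finset.sum_congr rfl fun k hk => ?_
  have : k ≤ n := by simp at hk; omega
  rw [Nat.choose_symm this, sq]

lemma V2 (n : ℕ) : ∑ k ∈ Finset.range (n+1), ((n+1).choose k : ℝ) * ((n+1).choose (k+1) : ℝ)
    = ((2*n+2).choose n : ℝ) := by
  rw [show 2*n+2 = (n+1)+(n+1) by ring, Nat.add_choose_eq,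
    Finset.Nat.sum_antidiagonal_eq_sum_range_succ_mk]
  push_cast
  refine Finset.sum_congr rfl fun k hk => ?_
  have : k ≤ n := by simp at hk; omega
  rw [← Nat.choose_symm (show k + 1 ≤ n+1 by omega), show n + 1 - (k+1) = n - k by omega]

lemma c1 (n k : ℕ) : ((k:ℝ)+1) * ((n+1).choose (k+1) : ℝ) = (n+1) * (n.choose k : ℝ) := by
  have := Nat.add_one_mul_choose_eq n k
  have h : ((n:ℝ)+1) * (n.choose k : ℝ) = ((n+1).choose (k+1) : ℝ) * (k+1) := by exact_mod_cast this
  linarith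

lemma c2 (n k : ℕ) : ((n:ℝ)-k) * (n.choose k : ℝ) = ((k:ℝ)+1) * (n.choose (k+1) : ℝ) := by
  rcases le_or_gt k n with hk | hk
  · have := Nat.choose_succ_right_eq n k
    have h : ((n.choose (k+1) : ℕ):ℝ) * (k+1) = (n.choose k : ℝ) * ((n - k : ℕ):ℝ) := by exact_mod_cast this
    rw [Nat.cast_sub hk] at h
    linarith
  · rw [Nat.choose_eq_zero_of_lt hk, Nat.choose_eq_zero_of_lt (by omega)]; simp

lemma c3 (n k : ℕ) : ((n:ℝ)+1-(k+1)+1-1) * ((n+1).choose (k+1) : ℝ) = (n+1) * (n.choose (k+1) : ℝ) := by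
  have h1 := c2 (n+1) (k+1)
  have h2 := c1 n (k+1)
  push_cast at h1 h2
  linarith

lemma S1 (n : ℕ) : ∑ k ∈ Finset.range (n+3), ((k:ℝ) * (n+2-k)) * ((n+2).choose k : ℝ)^2
    = ((n:ℝ)+2)^2 * ((2*n+2).choose n : ℝ) := by
  rw [Finset.sum_range_succ, Finset.sum_range_succ', ← V2, Finset.mul_sum]
  push_cast
  simp only [sub_self, mul_zero, zero_mul, add_zero]
  refine Finset.sum_congr rfl fun k hk => ?_
  have h1 := c1 (n+1) k
  have h2 := c3 (n+1) k
  push_cast at h1 h2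
  have : ((k:ℝ)+1) * (n+2-(k+1)) * ((n+2).choose (k+1) : ℝ)^2
    = (((k:ℝ)+1) * ((n+1+1).choose (k+1) : ℝ)) * ((n+1+1-(k+1)+1-1) * ((n+1+1).choose (k+1) : ℝ)) := by ring
  rw [this, h1, h2]; ring

lemma S2 (n : ℕ) : ∑ k ∈ Finset.range (n+3), ((k:ℝ) * (n+2-k))^2 * ((n+2).choose k : ℝ)^2
    = (((n:ℝ)+2)*(n+1))^2 * (n.centralBinom : ℝ) := by
  rw [Finset.sum_range_succ, Finset.sum_range_succ', ← V1, Finset.mul_sum]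
  push_cast
  simp only [sub_self, mul_zero, zero_mul, add_zero, ne_eq, OfNat.ofNat_ne_zero, not_false_eq_true, zero_pow]
  refine Finset.sum_congr rfl fun k hk => ?_
  have h1 := c1 (n+1) k
  have h2 := c2 (n+1) k
  have h3 := c1 n k
  push_cast at h1 h2 h3
  have : ((k:ℝ)+1) * (n+2-(k+1)) * ((n+2).choose (k+1) : ℝ) = ((n:ℝ)+2)*(n+1) * (n.choose k : ℝ) := by
    linear_combination (n+2-(k+1):ℝ) * h1 + (n+2:ℝ) * h2 + (n+2:ℝ) * h3
  rw [← mul_pow, this]; ring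

lemma cB (n : ℕ) : ((n:ℝ)+1) * ((n+1).centralBinom : ℝ) = 2*(2*n+1) * (n.centralBinom : ℝ) := by
  exact_mod_cast Nat.succ_mul_centralBinom_succ n

lemma fourth (n : ℕ) : ∑ k ∈ Finset.range (n+3), (2*(k:ℝ)-(n+2))^4 * ((n+2).choose k : ℝ)^2
    ≤ 4 * ((n:ℝ)+2)^2 * ((n+2).centralBinom : ℝ) := by
  have e : ∑ k ∈ Finset.range (n+3), (2*(k:ℝ)-(n+2))^4 * ((n+2).choose k : ℝ)^2
    = (n+2:ℝ)^4 * ((n+2).centralBinom : ℝ) - 8*(n+2:ℝ)^2 * (((n:ℝ)+2)^2 * ((2*n+2).choose n : ℝ))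
      + 16 * ((((n:ℝ)+2)*(n+1))^2 * (n.centralBinom : ℝ)) := by
    rw [← V1 (n+2), ← S1, ← S2, Finset.mul_sum, Finset.mul_sum, Finset.mul_sum,
      ← Finset.sum_sub_distrib, ← Finset.sum_add_distrib]
    refine Finset.sum_congr rfl fun k hk => ?_
    ring
  rw [e]
  have b1 := cB n
  have b2 := cB (n+1)
  have b3 := c2 (2*n+2) n
  rw [show (2*n+2).choose (n+1) = (n+1).centralBinom by rw [Nat.centralBinom]; ring_nf] at b3
  push_cast at b1 b2 b3
  have hB : (0:ℝ) ≤ (n.centralBinom : ℝ) := by positivity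
  set B := (n.centralBinom : ℝ)
  have p1 : (0:ℝ) < n+1 := by positivity
  have p2 : (0:ℝ) < n+2 := by positivity
  have q1 : ((n+1).centralBinom : ℝ) = 2*(2*n+1) * B / (n+1) := by field_simp; linarith
  have q3 : ((2*n+2).choose n : ℝ) = 2*(2*n+1) * B / (n+2) := by
    field_simp; rw [q1] at b3; field_simp at b3; linarith
  have q2 : ((n+2).centralBinom : ℝ) = 4*(2*n+3)*(2*n+1) * B / ((n+1)*(n+2)) := by
    rw [q1] at b2; rw [show n+1+1 = n+2 from rfl] at b2; field_simp at b2 ⊢; linarith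
  rw [q2, q3, ← sub_nonneg]
  have : 4 * ((n:ℝ)+2)^2 * (4*(2*n+3)*(2*n+1) * B / ((n+1)*(n+2))) - ((n+2:ℝ)^4 * (4*(2*n+3)*(2*n+1) * B / ((n+1)*(n+2))) - 8*(n+2:ℝ)^2 * (((n:ℝ)+2)^2 * (2*(2*n+1) * B / (n+2)))
      + 16 * ((((n:ℝ)+2)*(n+1))^2 * B)) = 4 * (n+2) / (n+1) * B * (4*(2*n+3)*(2*n+1) - (n+2)*(3*n+2)) := by
    field_simp; ring
  rw [this]
  have : (0:ℝ) ≤ (4*(2*n+3)*(2*n+1) - (n+2)*(3*n+2)) := by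
    have : (0:ℝ) ≤ n := by positivity
    nlinarith
  positivity

lemma aSucc (m j : ℕ) : ((m:ℝ)-j) * ((2*m).choose (m+j) : ℝ) = (m+j+1) * ((2*m).choose (m+j+1) : ℝ) := by
  have := c2 (2*m) (m+j)
  push_cast at this
  linarith

lemma dEq (m j : ℕ) : ((m:ℝ)+j+1) * (((2*m).choose (m+j) : ℝ) - ((2*m).choose (m+j+1) : ℝ))
    = (2*j+1) * ((2*m).choose (m+j) : ℝ) := by
  have := aSucc m j
  linarith

lemma dCast (m j : ℕ) : ((Nat.choose (2 * m) (m + j) - Nat.choose (2 * m) (m + j + 1) : ℕ) : ℝ)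
    = ((2*m).choose (m+j) : ℝ) - ((2*m).choose (m+j+1) : ℝ) := by
  apply Nat.cast_sub
  have h := dEq m j
  have h2 : (0:ℝ) ≤ ((2*m).choose (m+j) : ℝ) - ((2*m).choose (m+j+1) : ℝ) := by
    have p : (0:ℝ) < (m:ℝ)+j+1 := by positivity
    have q : (0:ℝ) ≤ (2*j+1) * ((2*m).choose (m+j) : ℝ) := by positivity
    rw [← h] at q
    exact nonneg_of_mul_nonneg_right q p
  have h3 : ((2*m).choose (m+j+1) : ℝ) ≤ ((2*m).choose (m+j) : ℝ) := by linarith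
  exact_mod_cast h3

lemma catR (m : ℕ) : (2*(m:ℝ)+1) * (catalan (2*m) : ℝ) = ((2*m).centralBinom : ℝ) := by
  exact_mod_cast succ_mul_catalan_eq_centralBinom (2*m)

lemma norm_sum (m : ℕ) (hm : 1 ≤ m) : ∑ j ∈ Finset.range (m+1),
    (((2*m).choose (m+j) : ℝ) - ((2*m).choose (m+j+1) : ℝ))^2 = (catalan (2*m) : ℝ) := by
  obtain ⟨n, hn⟩ : ∃ n, 2*m = n+1 := ⟨2*m-1, by omega⟩
  have h1 := V1 (2*m)
  have h2 := V2 n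
  rw [← hn] at h2
  have e1 : ∑ k ∈ Finset.range (2*m+1), ((2*m).choose k : ℝ)^2
      = ∑ j ∈ Finset.range m, ((2*m).choose (m+j+1) : ℝ)^2
        + ∑ j ∈ Finset.range (m+1), ((2*m).choose (m+j) : ℝ)^2 := by
    rw [show 2*m+1 = m + (m+1) by ring, Finset.sum_range_add, ← Finset.sum_range_reflect]
    congr 1
    refine Finset.sum_congr rfl fun k hk => ?_
    have : k < m := by simpa using hk
    rw [← Nat.choose_symm (show m - 1 - k ≤ 2*m by omega), show 2*m - (m-1-k) = m+k+1 by omega]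
  have e2 : ∑ k ∈ Finset.range (2*m), ((2*m).choose k : ℝ) * ((2*m).choose (k+1) : ℝ)
      = 2 * ∑ j ∈ Finset.range m, ((2*m).choose (m+j) : ℝ) * ((2*m).choose (m+j+1) : ℝ) := by
    conv_lhs => rw [show Finset.range (2*m) = Finset.range (m + m) by rw [two_mul]]
    rw [Finset.sum_range_add, ← Finset.sum_range_reflect, two_mul (Finset.sum _ _)]
    congr 1
    refine Finset.sum_congr rfl fun k hk => ?_
    have : k < m := by simpa using hk
    rw [← Nat.choose_symm (show m - 1 - k ≤ 2*m by omega), show 2*m - (m-1-k) = m+k+1 by omega,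
      ← Nat.choose_symm (show m - 1 - k + 1 ≤ 2*m by omega), show 2*m - (m-1-k+1) = m+k by omega]
    ring
  have e3 : ∑ j ∈ Finset.range (m+1), (((2*m).choose (m+j) : ℝ) - ((2*m).choose (m+j+1) : ℝ))^2
      = ∑ j ∈ Finset.range (m+1), ((2*m).choose (m+j) : ℝ)^2
        + ∑ j ∈ Finset.range m, ((2*m).choose (m+j+1) : ℝ)^2
        - 2 * ∑ j ∈ Finset.range m, ((2*m).choose (m+j) : ℝ) * ((2*m).choose (m+j+1) : ℝ) := by
    have z : (2*m).choose (m+m+1) = 0 := Nat.choose_eq_zero_of_lt (by omega)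
    rw [Finset.sum_range_succ, Finset.sum_range_succ (fun j => ((2*m).choose (m+j) : ℝ)^2), z,
      Finset.mul_sum]
    have : ∑ j ∈ Finset.range m, (((2*m).choose (m+j) : ℝ) - ((2*m).choose (m+j+1) : ℝ))^2
      = ∑ j ∈ Finset.range m, ((2*m).choose (m+j) : ℝ)^2
        + ∑ j ∈ Finset.range m, ((2*m).choose (m+j+1) : ℝ)^2
        - ∑ j ∈ Finset.range m, 2 * (((2*m).choose (m+j) : ℝ) * ((2*m).choose (m+j+1) : ℝ)) := by
      rw [← Finset.sum_add_distrib, ← Finset.sum_sub_distrib]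
      exact Finset.sum_congr rfl fun k hk => by ring
    rw [this]; push_cast; ring
  rw [e3, ← e2]
  have h4 := catR m
  have h5 := c2 (2*n+2) n
  rw [show (2*n+2).choose (n+1) = (2*m).centralBinom by rw [Nat.centralBinom, hn]; ring_nf] at h5
  have hnr : (n:ℝ) = 2*m - 1 := by
    have : (2*(m:ℝ)) = n+1 := by exact_mod_cast hn
    linarith
  push_cast at h5
  rw [hnr] at h5
  have key : (2*(m:ℝ)+1) * (((2*m).centralBinom : ℝ) - ((2*n+2).choose n : ℝ)) = (2*m+1) * (catalan (2*m) : ℝ) := by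
    rw [h4]; linarith
  have key2 := mul_left_cancel₀ (by positivity) key
  linarith

lemma up_sum (m : ℕ) (f : ℝ → ℝ) (hf : ∀ x, 0 ≤ f x) :
    ∑ j ∈ Finset.range (m+1), f j * ((2*m).choose (m+j) : ℝ)^2 ≤
    ∑ k ∈ Finset.range (2*m+1), f (k - m) * ((2*m).choose k : ℝ)^2 := by
  rw [show 2*m+1 = m + (m+1) by ring, Finset.sum_range_add _ m (m+1)]
  have : 0 ≤ ∑ k ∈ Finset.range m, f (k - m) * ((2*m).choose k : ℝ)^2 :=
    Finset.sum_nonneg fun k _ => mul_nonneg (hf _) (by positivity)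
  have e : ∑ j ∈ Finset.range (m+1), f j * ((2*m).choose (m+j) : ℝ)^2
     = ∑ j ∈ Finset.range (m+1), f ((m+j:ℕ) - m) * ((2*m).choose (m+j) : ℝ)^2 :=
    Finset.sum_congr rfl fun k hk => by push_cast; rw [add_sub_cancel_left]
  linarith

lemma low_bd (m : ℕ) (hm : 1 ≤ m) : ∑ j ∈ Finset.range (m+1),
    (((2*m).choose (m+j) : ℝ) - ((2*m).choose (m+j+1) : ℝ))^2 * (m / (2*(j:ℝ)+1)^2)
    ≤ 2 * (catalan (2*m) : ℝ) := by
  have h := up_sum m (fun _ => 1) (fun _ => zero_le_one)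
  simp only [one_mul] at h
  rw [V1, ← catR] at h
  have hc : (0:ℝ) ≤ (catalan (2*m) : ℝ) := by positivity
  have hm' : (1:ℝ) ≤ m := by exact_mod_cast hm
  calc _ ≤ ∑ j ∈ Finset.range (m+1), m / ((m:ℝ)+1)^2 * ((2*m).choose (m+j) : ℝ)^2 := by
        refine Finset.sum_le_sum fun j _ => ?_
        have hd : (((2*m).choose (m+j) : ℝ) - ((2*m).choose (m+j+1) : ℝ))
          = (2*j+1) * ((2*m).choose (m+j) : ℝ) / (m+j+1) := by
          rw [← dEq]; field_simp
        have : ((2*j+1) * ((2*m).choose (m+j) : ℝ) / (m+j+1))^2 * (m / (2*(j:ℝ)+1)^2)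
          = m / ((m:ℝ)+j+1)^2 * ((2*m).choose (m+j) : ℝ)^2 := by field_simp
        rw [hd, this]
        gcongr
        linarith [(Nat.cast_nonneg j : (0:ℝ) ≤ j)]
    _ ≤ m / ((m:ℝ)+1)^2 * ((2*m+1) * (catalan (2*m) : ℝ)) := by
        rw [← Finset.mul_sum]; gcongr
    _ = (m * (2*m+1) / ((m:ℝ)+1)^2) * (catalan (2*m) : ℝ) := by ring
    _ ≤ _ := by
        gcongr
        rw [div_le_iff₀ (by positivity)]
        nlinarith

lemma up_bd (m : ℕ) (hm : 1 ≤ m) : ∑ j ∈ Finset.range (m+1),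
    (((2*m).choose (m+j) : ℝ) - ((2*m).choose (m+j+1) : ℝ))^2 * ((2*(j:ℝ)+1)^2 / m)
    ≤ 300 * (catalan (2*m) : ℝ) := by
  have hc : (0:ℝ) ≤ (catalan (2*m) : ℝ) := by positivity
  have hm' : (1:ℝ) ≤ m := by exact_mod_cast hm
  have h := up_sum m (fun x => 1 + 81 * x^4) (fun _ => by positivity)
  have h4 : ∑ k ∈ Finset.range (2*m+1), (1 + 81 * ((k:ℝ)-m)^4) * ((2*m).choose k : ℝ)^2
      ≤ (1 + 81 * m^2) * ((2*m).centralBinom : ℝ) := by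
    obtain ⟨n, hn⟩ : ∃ n, 2*m = n+2 := ⟨2*m-2, by omega⟩
    have h5 := fourth n
    have hnr : (n:ℝ)+2 = 2*m := by exact_mod_cast hn.symm
    rw [show n+3 = 2*m+1 by omega, ← hn, hnr] at h5
    have : ∑ k ∈ Finset.range (2*m+1), (1 + 81 * ((k:ℝ)-m)^4) * ((2*m).choose k : ℝ)^2
      = ∑ k ∈ Finset.range (2*m+1), ((2*m).choose k : ℝ)^2
        + 81/16 * ∑ k ∈ Finset.range (2*m+1), (2*(k:ℝ)-2*m)^4 * ((2*m).choose k : ℝ)^2 := by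
      rw [Finset.mul_sum, ← Finset.sum_add_distrib]
      exact Finset.sum_congr rfl fun k hk => by ring
    rw [this, V1]
    nlinarith
  have h6 := h.trans h4
  rw [← catR] at h6
  calc _ ≤ ∑ j ∈ Finset.range (m+1), 1 / (m * (m:ℝ)^2) * ((1 + 81 * (j:ℝ)^4) * ((2*m).choose (m+j) : ℝ)^2) := by
        refine Finset.sum_le_sum fun j _ => ?_
        have hd : (((2*m).choose (m+j) : ℝ) - ((2*m).choose (m+j+1) : ℝ))
          = (2*j+1) * ((2*m).choose (m+j) : ℝ) / (m+j+1) := by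
          rw [← dEq]; field_simp
        have : ((2*j+1) * ((2*m).choose (m+j) : ℝ) / (m+j+1))^2 * ((2*(j:ℝ)+1)^2 / m)
          = 1 / (m * ((m:ℝ)+j+1)^2) * ((2*j+1)^4 * ((2*m).choose (m+j) : ℝ)^2) := by field_simp
        rw [hd, this]
        have hj : (2*(j:ℝ)+1)^4 ≤ 1 + 81 * (j:ℝ)^4 := by
          rcases Nat.eq_zero_or_pos j with rfl | hj
          · simp
          · have hj' : (1:ℝ) ≤ j := by exact_mod_cast hj
            have : (2*(j:ℝ)+1)^4 ≤ (3*j)^4 := by gcongr; linarith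
            nlinarith
        gcongr
        linarith [(Nat.cast_nonneg j : (0:ℝ) ≤ j)]
    _ ≤ 1 / (m * (m:ℝ)^2) * ((1 + 81 * m^2) * ((2*m+1) * (catalan (2*m) : ℝ))) := by
        rw [← Finset.mul_sum]; gcongr
    _ = ((1 + 81 * m^2) * (2*m+1) / (m * (m:ℝ)^2)) * (catalan (2*m) : ℝ) := by ring
    _ ≤ _ := by
        gcongr
        rw [div_le_iff₀ (by positivity)]
        have : (1 + 81 * (m:ℝ)^2) * (2*m+1) ≤ (82 * m^2) * (3*m) := by gcongr <;> nlinarith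
        nlinarith [pow_pos (lt_of_lt_of_le zero_lt_one hm') 3]

lemma log_up (x y : ℝ) (hx : 0 < x) (hy : 0 < y) : Real.log x ≤ 1/2 * (Real.log y + (x^2/y)) := by
  have h := Real.log_le_sub_one_of_pos (show 0 < x^2/y by positivity)
  rw [Real.log_div (by positivity) (by positivity), Real.log_pow] at h
  push_cast at h
  linarith

lemma log_low (x y : ℝ) (hx : 0 < x) (hy : 0 < y) : 1/2 * (Real.log y - (y/x^2)) ≤ Real.log x := by
  have h := Real.log_le_sub_one_of_pos (show 0 < y/x^2 by positivity)
  rw [Real.log_div (by positivity) (by positivity), Real.log_pow] at h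
  push_cast at h
  linarith

lemma E_bd (m : ℕ) (hm : 1 ≤ m) : |(∑ j ∈ Finset.range (m + 1),
          ((Nat.choose (2 * m) (m + j) - Nat.choose (2 * m) (m + j + 1) : ℕ) : ℝ) ^ 2 *
            Real.log (2 * (j : ℝ) + 1)) / (catalan (2 * m) : ℝ) - 1/2 * Real.log m| ≤ 150 := by
  have hm' : (0:ℝ) < m := by exact_mod_cast hm
  simp only [dCast]
  have hc : (0:ℝ) < (catalan (2*m) : ℝ) := by
    have h := catR m
    have : (0:ℝ) < ((2*m).centralBinom : ℝ) := by exact_mod_cast Nat.centralBinom_pos _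
    rw [← h] at this
    exact pos_of_mul_pos_right this (by positivity)
  have hn := norm_sum m hm
  have hl := low_bd m hm
  have hu := up_bd m hm
  set C := (catalan (2*m) : ℝ)
  set d : ℕ → ℝ := fun j => (((2*m).choose (m+j) : ℝ) - ((2*m).choose (m+j+1) : ℝ))^2
  have hd : ∀ j, 0 ≤ d j := fun j => sq_nonneg _
  change ∑ j ∈ Finset.range (m+1), d j = C at hn
  change ∑ j ∈ Finset.range (m+1), d j * _ ≤ _ at hl
  change ∑ j ∈ Finset.range (m+1), d j * _ ≤ _ at hu
  change |(∑ j ∈ Finset.range (m+1), d j * _) / C - _| ≤ _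
  have u : ∑ j ∈ Finset.range (m+1), d j * Real.log (2*(j:ℝ)+1) ≤ 1/2 * (C * Real.log m + 300 * C) := by
    calc _ ≤ ∑ j ∈ Finset.range (m+1), d j * (1/2 * (Real.log m + ((2*(j:ℝ)+1)^2/m))) :=
          Finset.sum_le_sum fun j _ => mul_le_mul_of_nonneg_left (log_up _ _ (by positivity) hm') (hd j)
      _ = 1/2 * ((∑ j ∈ Finset.range (m+1), d j) * Real.log m + ∑ j ∈ Finset.range (m+1), d j * ((2*(j:ℝ)+1)^2/m)) := by
          rw [Finset.sum_mul, ← Finset.sum_add_distrib, Finset.mul_sum]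
          exact Finset.sum_congr rfl fun k hk => by ring
      _ ≤ _ := by rw [hn]; linarith
  have l : 1/2 * (C * Real.log m - 2 * C) ≤ ∑ j ∈ Finset.range (m+1), d j * Real.log (2*(j:ℝ)+1) := by
    calc _ ≤ 1/2 * ((∑ j ∈ Finset.range (m+1), d j) * Real.log m - ∑ j ∈ Finset.range (m+1), d j * (m/(2*(j:ℝ)+1)^2)) := by
          rw [hn]; linarith
      _ = ∑ j ∈ Finset.range (m+1), d j * (1/2 * (Real.log m - (m/(2*(j:ℝ)+1)^2))) := by
          rw [Finset.sum_mul, ← Finset.sum_sub_distrib, Finset.mul_sum]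
          exact Finset.sum_congr rfl fun k hk => by ring
      _ ≤ _ :=
          Finset.sum_le_sum fun j _ => mul_le_mul_of_nonneg_left (log_low _ _ (by positivity) hm') (hd j)
  rw [abs_le]
  constructor
  · rw [le_sub_iff_add_le, le_div_iff₀ hc]; nlinarith
  · rw [sub_le_iff_le_add, div_le_iff₀ hc]; nlinarith

/-- With d_j := C(2m, m+j) − C(2m, m+j+1) and
E_m := (Σ_{j=0}^{m} d_j² · log(2j+1)) / catalan(2m), one has E_m / log m → 1/2. -/
theorem stmt_19 (E : ℕ → ℝ)
    (hE : ∀ m,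
      E m = (∑ j ∈ Finset.range (m + 1),
          ((Nat.choose (2 * m) (m + j) - Nat.choose (2 * m) (m + j + 1) : ℕ) : ℝ) ^ 2 *
            Real.log (2 * (j : ℝ) + 1)) / (catalan (2 * m) : ℝ)) :
    Tendsto (fun m : ℕ => E m / Real.log m) atTop (nhds (1 / 2)) := by
  have hlog : Tendsto (fun m : ℕ => Real.log m) atTop atTop :=
    Real.tendsto_log_atTop.comp tendsto_natCast_atTop_atTop
  have h0 : Tendsto (fun m : ℕ => 150 / Real.log m) atTop (nhds 0) := hlog.const_div_atTop 150
  rw [tendsto_iff_norm_sub_tendsto_zero]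
  refine squeeze_zero' (Eventually.of_forall fun _ => norm_nonneg _) ?_ h0
  filter_upwards [eventually_ge_atTop 1, hlog.eventually_gt_atTop 0] with m hm hl
  have h := E_bd m hm
  rw [← hE m] at h
  rw [Real.norm_eq_abs, show E m / Real.log m - 1/2 = (E m - 1/2 * Real.log m) / Real.log m by field_simp,
    abs_div, abs_of_pos hl]
  gcongr
end
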